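/- Let 0 < P₁ < P₂ < ⋯ < P_M be powers with M ≥ 3. Then the consecutive thresholds t_k := g₀*(P_k, P_{k+1}), for k = 1, …, M−1, form a strictly decreasing sequence: t₁ > t₂ > ⋯ > t_{M−1}. -/

import Mathlib

/-- The decisional threshold between two power decisions. -/
noncomputable def g0 (c σ2 Pi Pj : ℝ) : ℝ :=
  c * σ2 * (1 / Pi - 1 / Pj) / (Real.log Pj - Real.log Pi)

theorem g0_bounds (c σ2 a b : ℝ) (hc : 0 < c) (hσ2 : 0 < σ2) (ha : 0 < a) (hab : a < b) :
    c * σ2 / b < g0 c σ2 a b ∧ g0 c σ2 a b < c * σ2 / a := by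
  have hb : 0 < b := ha.trans hab
  have hK : 0 < c * σ2 := mul_pos hc hσ2
  have hL : 0 < Real.log b - Real.log a := sub_pos.2 (Real.log_lt_log ha hab)
  have h1 := Real.log_lt_sub_one_of_pos (div_pos ha hb) (by
    rw [Ne, div_eq_one_iff_eq hb.ne']; exact hab.ne)
  have h2 := Real.log_lt_sub_one_of_pos (div_pos hb ha) (by
    rw [Ne, div_eq_one_iff_eq ha.ne']; exact hab.ne')
  rw [Real.log_div ha.ne' hb.ne'] at h1
  rw [Real.log_div hb.ne' ha.ne'] at h2
  unfold g0
  constructor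
  · rw [lt_div_iff₀ hL]
    have h3 := mul_lt_mul_of_pos_left h2 (div_pos hK hb)
    have e : c * σ2 / b * (b / a - 1) = c * σ2 * (1 / a - 1 / b) := by field_simp
    rwa [e] at h3
  · rw [div_lt_iff₀ hL]
    have h3 := mul_lt_mul_of_pos_left
      (show 1 - a / b < Real.log b - Real.log a by linarith) (div_pos hK ha)
    have e : c * σ2 / a * (1 - a / b) = c * σ2 * (1 / a - 1 / b) := by field_simp
    rwa [e] at h3

/-- Let `0 < P₁ < P₂ < ⋯ < P_M` with `M ≥ 3`. The consecutive thresholds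
`t_k := g₀*(P_k, P_{k+1})`, `k = 1, …, M−1`, form a strictly decreasing
sequence: `t₁ > t₂ > ⋯ > t_{M−1}`. -/
theorem consecutive_thresholds_strict_decreasing (c σ2 : ℝ) (M : ℕ) (P : ℕ → ℝ)
    (hc : 0 < c) (hσ2 : 0 < σ2) (hM : 3 ≤ M)
    (hP0 : 0 < P 1)
    (hmono : ∀ k, 1 ≤ k → k < M → P k < P (k + 1)) :
    ∀ k l, 1 ≤ k → k < l → l ≤ M - 1 →
      g0 c σ2 (P k) (P (k + 1)) > g0 c σ2 (P l) (P (l + 1)) := by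
  have hpos : ∀ k, 1 ≤ k → k ≤ M → 0 < P k := by
    intro k hk
    induction k, hk using Nat.le_induction with
    | base => intro _; exact hP0
    | succ n hn ih => intro h; exact (ih (by omega)).trans (hmono n hn (by omega))
  intro k l hk hkl hl
  have hle : ∀ m, k + 1 ≤ m → m ≤ M → P (k + 1) ≤ P m := by
    intro m hm
    induction m, hm using Nat.le_induction with
    | base => intro _; exact le_rfl
    | succ n hn ih =>
      intro h; exact (ih (by omega)).trans (hmono n (by omega) (by omega)).le
  have b1 := (g0_bounds c σ2 (P k) (P (k + 1)) hc hσ2 (hpos k hk (by omega))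
    (hmono k hk (by omega))).1
  have b2 := (g0_bounds c σ2 (P l) (P (l + 1)) hc hσ2 (hpos l (by omega) (by omega))
    (hmono l (by omega) (by omega))).2
  have h3 : c * σ2 / P l ≤ c * σ2 / P (k + 1) :=
    div_le_div_of_nonneg_left (mul_pos hc hσ2).le (hpos (k + 1) (by omega) (by omega))
      (hle l (by omega) (by omega))
  exact (b2.trans_le h3).trans b1
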